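/- Let f be a multicritical circle map with irrational rotation number and return times q_n. There exists a constant C_1 > 1 depending only on f such that for each n ≥ 0 there exist points z_1, z_2, z_3, z_4, z_5 ∈ S^1 with z_{j+1} = f^{q_n}(z_j) for j = 1,…,4, satisfying C_1^{−1} ≤ |z_{i−1} − z_i|/|z_{i+1} − z_i| ≤ C_1 for i = 2, 3, 4, where |u − v| denotes the length of the arc between the consecutive points u and v. -/

import Mathlib

open Set Filter MeasureTheory

noncomputable section

/-- The Schwarzian derivative `Sf = (f''/f')' - (1/2) (f''/f')^2`. -/
def schwarzianDeriv (f : ℝ → ℝ) (x : ℝ) : ℝ :=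
  deriv (fun y => deriv (deriv f) y / deriv f y) x
    - (1 / 2) * (deriv (deriv f) x / deriv f x) ^ 2

/-- A multicritical circle map, described through its lift `F : ℝ → ℝ` to the real line.
It is an orientation-preserving `C^3` circle homeomorphism with finitely many critical
points `c 0, …, c (N-1)`, each of non-flat power-law type: near `c i` the derivative is
pinched between two multiples of `|x - c i| ^ (s i - 1)` with `s i > 1`, the Schwarzian
derivative is negative on a punctured neighborhood of each critical point, and
`log (F')` has bounded variation (bounded by `v`) off the critical neighborhoods. -/
structure MCM where
  /-- the lift of the circle map -/
  F : ℝ → ℝ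
  smooth : ContDiff ℝ 3 F
  mono : StrictMono F
  deg1 : ∀ x, F (x + 1) = F x + 1
  /-- number of critical points -/
  N : ℕ
  N_pos : 0 < N
  /-- the critical points (one representative in `[0,1)` for each) -/
  c : Fin N → ℝ
  c_mem : ∀ i, c i ∈ Set.Ico (0 : ℝ) 1
  c_inj : Function.Injective c
  isCrit : ∀ i, deriv F (c i) = 0
  critOnly : ∀ x, deriv F x = 0 → ∃ (i : Fin N) (k : ℤ), x = c i + (k : ℝ)
  /-- neighborhoods of the critical points -/
  W : Fin N → Set ℝ
  W_open : ∀ i, IsOpen (W i)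
  c_mem_W : ∀ i, c i ∈ W i
  /-- the criticalities (power-law exponents) -/
  s : Fin N → ℝ
  s_gt_one : ∀ i, 1 < s i
  al : Fin N → ℝ
  be : Fin N → ℝ
  al_pos : ∀ i, 0 < al i
  al_lt_be : ∀ i, al i < be i
  powerLaw : ∀ i, ∀ x ∈ W i, x ≠ c i →
    al i * |x - c i| ^ (s i - 1) < deriv F x ∧
      deriv F x < be i * |x - c i| ^ (s i - 1)
  negSchwarzian : ∀ i, ∀ x ∈ W i, x ≠ c i → schwarzianDeriv F x < 0
  /-- bound for the variation of `log DF` off the critical neighborhoods -/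
  v : ℝ
  v_pos : 0 < v
  logDF_var : eVariationOn (fun x => Real.log (deriv F x))
      (Set.Icc 0 1 \ ⋃ (i) (k : ℤ), (fun y => y + (k : ℝ)) '' W i) ≤ ENNReal.ofReal v

/-- The circle map with lift `F` has rotation number `ρ`. -/
def HasRotationNumber (F : ℝ → ℝ) (ρ : ℝ) : Prop :=
  Tendsto (fun n : ℕ => F^[n] 0 / n) atTop (nhds ρ)

/-- The Gauss map `x ↦ {1/x}`. -/
def gaussMap (x : ℝ) : ℝ := Int.fract x⁻¹

/-- Partial quotients `a_n` of the continued fraction expansion of `ρ ∈ (0,1)`. -/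
def cfDigit (ρ : ℝ) (n : ℕ) : ℕ := (⌊(gaussMap^[n] ρ)⁻¹⌋).toNat

/-- Return times: the denominators `q_n` of the convergents of `ρ`,
`q_0 = 1`, `q_1 = a_0`, `q_{n+1} = a_n q_n + q_{n-1}`. -/
def qDen (ρ : ℝ) : ℕ → ℕ
  | 0 => 1
  | 1 => cfDigit ρ 0
  | n + 2 => cfDigit ρ (n + 1) * qDen ρ (n + 1) + qDen ρ n

/-- Numerators `p_n` of the convergents of `ρ`:
`p_0 = 0`, `p_1 = 1`, `p_{n+1} = a_n p_n + p_{n-1}`. -/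
def pNum (ρ : ℝ) : ℕ → ℕ
  | 0 => 0
  | 1 => 1
  | n + 2 => cfDigit ρ (n + 1) * pNum ρ (n + 1) + pNum ρ n

/-!
Consider the cross-ratio of four consecutive points of an orbit of `F^[q_n] - p_n`. The convergent
`p_n / q_n` is a best approximation of `ρ`, so the first `q_n` images of the arc between two
consecutive points of the orbit have disjoint interiors on the circle; in particular their total
length is at most `1`. If a window of three consecutive arcs of total length `l` contains no
critical point, `f` increases its cross-ratio at most by a factor `exp (A l)`: near the critical
points the negative Schwarzian derivative prevents any increase, and elsewhere `log F'` is
Lipschitz. If it contains a critical point, the power law still bounds the factor by a constant,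
and by disjointness this happens boundedly often. Hence `F^[q_n]` increases the cross-ratio at most
by a factor `B` independent of `n`.

Now choose the orbit so that its fourth gap realises the minimal displacement of `F^[q_n] - p_n`.
The cross-ratio inequality bounds a gap in terms of the two gaps after it, and working backwards
from the minimal one bounds the three preceding gaps by a multiple of it.
-/

section ContinuedFraction

variable {ρ : ℝ}

lemma irrational_gaussMap_iterate (hirr : Irrational ρ) (n : ℕ) :
    Irrational (gaussMap^[n] ρ) := by
  induction n with
  | zero => exact hirr
  | succ n ih =>
    rw [Function.iterate_succ_apply']
    exact ih.inv.sub_intCast _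

lemma gaussMap_iterate_mem_Ioo (hirr : Irrational ρ) (hmem : ρ ∈ Ioo (0 : ℝ) 1) (n : ℕ) :
    gaussMap^[n] ρ ∈ Ioo (0 : ℝ) 1 := by
  cases n with
  | zero => exact hmem
  | succ n =>
    have hne := (irrational_gaussMap_iterate hirr (n + 1)).ne_zero
    rw [Function.iterate_succ_apply'] at hne ⊢
    exact ⟨(Int.fract_nonneg _).lt_of_ne' hne, Int.fract_lt_one _⟩

lemma cfDigit_eq_inv_sub (hirr : Irrational ρ) (hmem : ρ ∈ Ioo (0 : ℝ) 1) (n : ℕ) :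
    (cfDigit ρ n : ℝ) = (gaussMap^[n] ρ)⁻¹ - gaussMap^[n + 1] ρ := by
  have hfloor : 0 ≤ ⌊(gaussMap^[n] ρ)⁻¹⌋ :=
    Int.floor_nonneg.2 (inv_nonneg.2 (gaussMap_iterate_mem_Ioo hirr hmem n).1.le)
  rw [Function.iterate_succ_apply', gaussMap, Int.fract, sub_sub_cancel]
  exact_mod_cast congrArg (Int.cast : ℤ → ℝ) (Int.toNat_of_nonneg hfloor)

lemma cfDigit_pos (hirr : Irrational ρ) (hmem : ρ ∈ Ioo (0 : ℝ) 1) (n : ℕ) :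
    0 < cfDigit ρ n := by
  obtain ⟨h0, h1⟩ := gaussMap_iterate_mem_Ioo hirr hmem n
  have hinv := (one_lt_inv₀ h0).2 h1
  have hnext := (gaussMap_iterate_mem_Ioo hirr hmem (n + 1)).2
  exact_mod_cast (show (0 : ℝ) < cfDigit ρ n by rw [cfDigit_eq_inv_sub hirr hmem]; linarith)

lemma qDen_pos (hirr : Irrational ρ) (hmem : ρ ∈ Ioo (0 : ℝ) 1) : ∀ n, 0 < qDen ρ n
  | 0 => one_pos
  | 1 => cfDigit_pos hirr hmem 0
  | n + 2 => Nat.add_pos_right _ (qDen_pos hirr hmem n)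

/-- The signed error `q_n ρ - p_n` of the `n`-th convergent of `ρ`. -/
def convergentError (ρ : ℝ) (n : ℕ) : ℝ := qDen ρ n * ρ - pNum ρ n

lemma convergentError_succ (hirr : Irrational ρ) (hmem : ρ ∈ Ioo (0 : ℝ) 1) (n : ℕ) :
    convergentError ρ (n + 1) = -gaussMap^[n + 1] ρ * convergentError ρ n := by
  have hdigit := cfDigit_eq_inv_sub hirr hmem
  induction n with
  | zero =>
    simp only [convergentError, qDen, pNum, hdigit 0, Function.iterate_zero_apply]
    field_simp [hirr.ne_zero]
    push_cast
    ring
  | succ n ih =>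
    have hne := (irrational_gaussMap_iterate hirr (n + 1)).ne_zero
    have hrec : convergentError ρ (n + 2) =
        cfDigit ρ (n + 1) * convergentError ρ (n + 1) + convergentError ρ n := by
      simp only [convergentError, qDen, pNum]
      push_cast
      ring
    rw [hrec, hdigit, ih]
    field_simp
    ring

lemma convergentError_ne_zero (hirr : Irrational ρ) (hmem : ρ ∈ Ioo (0 : ℝ) 1) (n : ℕ) :
    convergentError ρ n ≠ 0 :=
  sub_ne_zero.2 ((hirr.natCast_mul (qDen_pos hirr hmem n).ne').ne_nat _)

lemma convergentError_mul_succ_neg (hirr : Irrational ρ) (hmem : ρ ∈ Ioo (0 : ℝ) 1) (n : ℕ) :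
    convergentError ρ n * convergentError ρ (n + 1) < 0 := by
  have hsq := mul_self_pos.2 (convergentError_ne_zero hirr hmem n)
  rw [convergentError_succ hirr hmem]
  nlinarith [(gaussMap_iterate_mem_Ioo hirr hmem (n + 1)).1]

lemma abs_convergentError_succ_le (hirr : Irrational ρ) (hmem : ρ ∈ Ioo (0 : ℝ) 1) (n : ℕ) :
    |convergentError ρ (n + 1)| ≤ |convergentError ρ n| := by
  obtain ⟨h0, h1⟩ := gaussMap_iterate_mem_Ioo hirr hmem (n + 1)
  rw [convergentError_succ hirr hmem, abs_mul, abs_neg, abs_of_pos h0]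
  exact mul_le_of_le_one_left (abs_nonneg _) h1.le

lemma convergent_det_sq (ρ : ℝ) (n : ℕ) :
    ((qDen ρ (n + 1) : ℤ) * pNum ρ n - pNum ρ (n + 1) * qDen ρ n) ^ 2 = 1 := by
  induction n with
  | zero => simp [qDen, pNum]
  | succ n ih =>
    rw [← ih]
    simp only [qDen, pNum]
    push_cast
    ring

lemma exists_eq_mul_add_mul_of_det_sq {q₁ p₁ q₀ p₀ : ℤ} (hdet : (q₁ * p₀ - p₁ * q₀) ^ 2 = 1)
    (m k : ℤ) : ∃ u v : ℤ, m = u * q₁ + v * q₀ ∧ k = u * p₁ + v * p₀ := by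
  set e := q₁ * p₀ - p₁ * q₀ with he
  refine ⟨e * (m * p₀ - k * q₀), e * (q₁ * k - p₁ * m), ?_, ?_⟩
  · linear_combination (-m) * hdet + e * m * he
  · linear_combination (-k) * hdet + e * k * he

/-- `p / q` is a best approximation of `ρ` (of the second kind): no nonzero pair `(m, k)` with
`0 ≤ m < q` makes `|m ρ - k|` smaller than `|q ρ - p|`. -/
def IsBestApprox (ρ : ℝ) (q : ℕ) (p : ℤ) : Prop :=
  ∀ m < q, ∀ k : ℤ, m ≠ 0 ∨ k ≠ 0 → |q * ρ - p| ≤ |m * ρ - k|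

lemma abs_le_abs_mul_add_mul {x y : ℝ} {u v : ℤ} (hxy : y * x ≤ 0) (huv : u * v ≤ 0)
    (hv : v ≠ 0) (hle : |x| ≤ |y|) : |x| ≤ |u * x + v * y| := by
  have hv1 : (1 : ℝ) ≤ |(v : ℝ)| := by exact_mod_cast Int.one_le_abs hv
  have huv' : (u : ℝ) * v ≤ 0 := by exact_mod_cast huv
  have hsame : 0 ≤ (u * x) * (v * y) := by nlinarith [mul_nonneg_of_nonpos_of_nonpos huv' hxy]
  calc |x| ≤ |y| := hle
    _ ≤ |v * y| := by rw [abs_mul]; exact le_mul_of_one_le_left (abs_nonneg y) hv1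
    _ ≤ |u * x + v * y| := sq_le_sq.1 (by nlinarith [sq_nonneg (u * x)])

lemma isBestApprox_convergent (hirr : Irrational ρ) (hmem : ρ ∈ Ioo (0 : ℝ) 1) (n : ℕ) :
    IsBestApprox ρ (qDen ρ n) (pNum ρ n) := by
  intro m hm k hmk
  cases n with
  | zero =>
    obtain rfl : m = 0 := Nat.lt_one_iff.1 hm
    have hk : (1 : ℝ) ≤ |(k : ℝ)| := by exact_mod_cast Int.one_le_abs (hmk.resolve_left (by simp))
    simpa [qDen, pNum, abs_of_pos hmem.1] using hmem.2.le.trans hk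
  | succ n =>
    obtain ⟨u, v, hmuv, hkuv⟩ := exists_eq_mul_add_mul_of_det_sq (convergent_det_sq ρ n) m k
    have : (m : ℤ) < qDen ρ (n + 1) := by exact_mod_cast hm
    have hq₀ : (0 : ℤ) < qDen ρ n := by exact_mod_cast qDen_pos hirr hmem n
    have hv : v ≠ 0 := by
      rintro rfl
      have hu : u = 0 := by
        by_contra hu
        rcases lt_or_gt_of_ne hu with h | h <;> nlinarith
      simp_all
    have huv : u * v ≤ 0 := by
      by_contra! hpos
      rcases pos_and_pos_or_neg_and_neg_of_mul_pos hpos with ⟨hu, hv'⟩ | ⟨hu, hv'⟩ <;> nlinarith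
    have hmain : (m : ℝ) * ρ - k = u * convergentError ρ (n + 1) + v * convergentError ρ n := by
      have hm' : (m : ℝ) = u * qDen ρ (n + 1) + v * qDen ρ n := by exact_mod_cast hmuv
      have hk' : (k : ℝ) = u * pNum ρ (n + 1) + v * pNum ρ n := by exact_mod_cast hkuv
      simp only [convergentError, hm', hk']
      ring
    rw [hmain]
    exact abs_le_abs_mul_add_mul (convergentError_mul_succ_neg hirr hmem n).le huv hv
      (abs_convergentError_succ_le hirr hmem n)

end ContinuedFraction

section OrbitOrder

open CircleDeg1Lift

lemma iterate_sub_lt_iterate_sub (g : CircleDeg1Lift) {m n : ℕ} {k l : ℤ}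
    (h : m * translationNumber g - k < n * translationNumber g - l) (x : ℝ) :
    g^[m] x - k < g^[n] x - l := by
  rcases le_total m n with hmn | hnm
  · obtain ⟨j, rfl⟩ := Nat.exists_eq_add_of_le' hmn
    have hτ : ((l - k : ℤ) : ℝ) < translationNumber (g ^ j) := by
      rw [translationNumber_pow]
      push_cast at h ⊢
      linarith
    have hlt := lt_map_of_int_lt_translationNumber (g ^ j) hτ (g^[m] x)
    rw [coe_pow, ← Function.iterate_add_apply] at hlt
    push_cast at hlt
    linarith
  · obtain ⟨j, rfl⟩ := Nat.exists_eq_add_of_le' hnm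
    have hτ : translationNumber (g ^ j) < ((k - l : ℤ) : ℝ) := by
      rw [translationNumber_pow]
      push_cast at h ⊢
      linarith
    have hlt := map_lt_of_translationNumber_lt_int (g ^ j) hτ (g^[n] x)
    rw [coe_pow, ← Function.iterate_add_apply] at hlt
    push_cast at hlt
    linarith

lemma iterate_sub_le_iterate_sub {g : CircleDeg1Lift} (hirr : Irrational (translationNumber g))
    {m n : ℕ} {k l : ℤ}
    (h : m * translationNumber g - k ≤ n * translationNumber g - l) (x : ℝ) :
    g^[m] x - k ≤ g^[n] x - l := by
  rcases h.lt_or_eq with hlt | heq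
  · exact (iterate_sub_lt_iterate_sub g hlt x).le
  have hmn : ((m : ℤ) - n) = 0 := by
    by_contra hne
    exact (hirr.intCast_mul hne).ne_int (k - l) (by push_cast; linarith)
  obtain rfl : m = n := by omega
  have hkl : (k : ℝ) = l := by linarith
  rw [hkl]

lemma iterate_sub_int (g : CircleDeg1Lift) (m : ℕ) (x : ℝ) (k : ℤ) :
    g^[m] (x - k) = g^[m] x - k := by
  simpa only [coe_pow] using (g ^ m).map_sub_int x k

lemma forall_lt_iterate_sub_or_forall_iterate_sub_lt {g : CircleDeg1Lift}
    (hirr : Irrational (translationNumber g)) {q : ℕ} (hq : 0 < q) (p : ℤ) :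
    (∀ x, x < g^[q] x - p) ∨ ∀ x, g^[q] x - p < x := by
  have hne : (q : ℝ) * translationNumber g - p ≠ 0 :=
    sub_ne_zero.2 ((hirr.natCast_mul hq.ne').ne_int p)
  rcases hne.lt_or_gt with h | h
  · right
    intro x
    simpa using iterate_sub_lt_iterate_sub g (m := q) (n := 0) (k := p) (l := 0)
      (by simpa using h) x
  · left
    intro x
    simpa using iterate_sub_lt_iterate_sub g (m := 0) (n := q) (k := 0) (l := p)
      (by simpa using h) x

end OrbitOrder

section NonoverlappingArcs

/-- The open arcs of `ℝ / ℤ` with lifts `uIoo (u i) (v i)`, for `i ∈ s`, are embedded and pairwise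
disjoint. -/
def NonoverlappingModOne {ι : Type*} (s : Finset ι) (u v : ι → ℝ) : Prop :=
  ∀ i ∈ s, ∀ j ∈ s, ∀ k : ℤ, i ≠ j ∨ k ≠ 0 →
    Disjoint (uIoo (u i) (v i)) (uIoo (u j + k) (v j + k))

namespace NonoverlappingModOne

variable {ι : Type*} {s : Finset ι} {u v : ι → ℝ}

lemma symm (h : NonoverlappingModOne s u v) : NonoverlappingModOne s v u := by
  intro i hi j hj k hijk
  simpa only [uIoo_comm] using h i hi j hj k hijk

lemma sum_abs_sub_le_one (h : NonoverlappingModOne s u v) : ∑ i ∈ s, |v i - u i| ≤ 1 := by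
  have hdisj : (s : Set ι).PairwiseDisjoint fun i => uIoo (u i) (v i) := by
    intro i hi j hj hij
    simpa using h i hi j hj 0 (Or.inl hij)
  have hvol : volume (⋃ i ∈ s, uIoo (u i) (v i)) = ENNReal.ofReal (∑ i ∈ s, |v i - u i|) := by
    rw [measure_biUnion_finset hdisj fun _ _ => measurableSet_Ioo,
      ENNReal.ofReal_sum_of_nonneg fun _ _ => abs_nonneg _]
    simp only [Real.volume_uIoo]
  by_contra! hlt
  have hvol_lt : volume (Ioc (0 : ℝ) (0 + 1)) < volume (⋃ i ∈ s, uIoo (u i) (v i)) := by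
    rw [hvol, Real.volume_Ioc]
    exact (ENNReal.ofReal_lt_ofReal_iff (by linarith)).2 (by linarith)
  obtain ⟨x, hx, y, hy, ⟨_, k, rfl⟩, hk, hxy⟩ :=
    (isAddFundamentalDomain_Ioc one_pos 0).exists_ne_zero_vadd_eq
      (Finset.measurableSet_biUnion s fun _ _ => measurableSet_Ioo).nullMeasurableSet hvol_lt
  simp only [mem_iUnion, exists_prop] at hx hy
  obtain ⟨i, hi, hx⟩ := hx
  obtain ⟨j, hj, hy⟩ := hy
  have hk0 : k ≠ 0 := by
    rintro rfl
    simp at hk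
  have hxy' : x + k = y := by
    rw [← hxy, AddSubgroup.vadd_def]
    simp [add_comm]
  refine disjoint_left.1 (h j hj i hi k (Or.inr hk0)) hy ?_
  rw [← hxy', uIoo, min_add_add_right, max_add_add_right]
  exact ⟨by linarith [hx.1], by linarith [hx.2]⟩

lemma disjoint_Ioo_min_max (h : NonoverlappingModOne s u v) {i j : ι} (hi : i ∈ s) (hj : j ∈ s)
    (hij : i ≠ j) (k : ℤ) :
    Disjoint (Ioo (min (u i) (v i)) (max (u i) (v i)))
      (Ioo (min (u j) (v j) + k) (max (u j) (v j) + k)) := by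
  simpa only [uIoo, ← min_add_add_right, ← max_add_add_right] using h i hi j hj k (Or.inl hij)

open Classical in
lemma card_filter_mem_Ico_le_one (h : NonoverlappingModOne s u v) (c : ℝ) :
    {i ∈ s | ∃ k : ℤ, c + k ∈ Ico (min (u i) (v i)) (max (u i) (v i))}.card ≤ 1 := by
  refine Finset.card_le_one.2 fun i hi j hj => ?_
  obtain ⟨hi, k, hk⟩ := Finset.mem_filter.1 hi
  obtain ⟨hj, l, hl⟩ := Finset.mem_filter.1 hj
  by_contra hij
  have hdisj := h.disjoint_Ioo_min_max hi hj hij (k - l)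
  rw [Ioo_disjoint_Ioo, ← Ico_disjoint_Ico] at hdisj
  push_cast at hdisj
  exact disjoint_left.1 hdisj hk ⟨by linarith [hl.1], by linarith [hl.2]⟩

open Classical in
lemma card_filter_mem_Ioc_le_one (h : NonoverlappingModOne s u v) (c : ℝ) :
    {i ∈ s | ∃ k : ℤ, c + k ∈ Ioc (min (u i) (v i)) (max (u i) (v i))}.card ≤ 1 := by
  refine Finset.card_le_one.2 fun i hi j hj => ?_
  obtain ⟨hi, k, hk⟩ := Finset.mem_filter.1 hi
  obtain ⟨hj, l, hl⟩ := Finset.mem_filter.1 hj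
  by_contra hij
  have hdisj := h.disjoint_Ioo_min_max hi hj hij (k - l)
  rw [Ioo_disjoint_Ioo, ← Ioc_disjoint_Ioc] at hdisj
  push_cast at hdisj
  exact disjoint_left.1 hdisj hk ⟨by linarith [hl.1], by linarith [hl.2]⟩

open Classical in
lemma card_filter_mem_uIcc_le_two (h : NonoverlappingModOne s u v) (huv : ∀ i ∈ s, u i ≠ v i)
    (c : ℝ) : {i ∈ s | ∃ k : ℤ, c + k ∈ uIcc (u i) (v i)}.card ≤ 2 := by
  have hsub : {i ∈ s | ∃ k : ℤ, c + k ∈ uIcc (u i) (v i)} ⊆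
      {i ∈ s | ∃ k : ℤ, c + k ∈ Ico (min (u i) (v i)) (max (u i) (v i))} ∪
        {i ∈ s | ∃ k : ℤ, c + k ∈ Ioc (min (u i) (v i)) (max (u i) (v i))} := by
    intro i hi
    obtain ⟨hi, k, hk₁, hk₂⟩ := Finset.mem_filter.1 hi
    rw [← Finset.filter_or, Finset.mem_filter]
    refine ⟨hi, ?_⟩
    rcases hk₂.lt_or_eq with hlt | heq
    · exact Or.inl ⟨k, hk₁, hlt⟩
    · exact Or.inr ⟨k, (min_lt_max.2 (huv i hi)).trans_eq heq.symm, hk₂⟩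
  calc _ ≤ _ := Finset.card_le_card hsub
    _ ≤ _ := Finset.card_union_le _ _
    _ ≤ 2 := add_le_add (h.card_filter_mem_Ico_le_one c) (h.card_filter_mem_Ioc_le_one c)

end NonoverlappingModOne

lemma disjoint_uIoo_of_le {a b c d : ℝ} (hac : a ≤ c) (had : a ≤ d) (hbc : b ≤ c) (hbd : b ≤ d) :
    Disjoint (uIoo a b) (uIoo c d) :=
  Ioo_disjoint_Ioo.2 <|
    (min_le_left _ _).trans ((max_le (le_min hac had) (le_min hbc hbd)).trans (le_max_right _ _))

open CircleDeg1Lift in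
lemma nonoverlappingModOne_iterate {g : CircleDeg1Lift} (hirr : Irrational (translationNumber g))
    {q : ℕ} {p : ℤ} (hbest : IsBestApprox (translationNumber g) q p) (x : ℝ) :
    NonoverlappingModOne (Finset.range q) (g^[·] x) (g^[·] (g^[q] x - p)) := by
  intro i hi j hj k hijk
  rw [Finset.mem_range] at hi hj
  set τ := translationNumber g
  have horder : ∀ {m n : ℕ} {k l : ℤ}, m * τ - k ≤ n * τ - l → g^[m] x - k ≤ g^[n] x - l :=
    fun h => iterate_sub_le_iterate_sub hirr h x
  have hgap : |q * τ - p| ≤ |j * τ + k - i * τ| := by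
    rcases le_total i j with hij | hji
    · have := hbest (j - i) (by omega) (-k) (by omega)
      rw [Nat.cast_sub hij] at this
      convert this using 2
      push_cast
      ring
    · have := hbest (i - j) (by omega) k (by omega)
      rw [Nat.cast_sub hji] at this
      rw [← abs_neg (j * τ + k - i * τ)]
      convert this using 2
      ring
  have hα₁ := neg_abs_le (q * τ - p)
  have hα₂ := le_abs_self (q * τ - p)
  have hui : g^[i] x = g^[i] x - (0 : ℤ) := by simp
  have huj : g^[j] x + k = g^[j] x - (-k : ℤ) := by simp
  have hvi : g^[i] (g^[q] x - p) = g^[i + q] x - p := by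
    rw [iterate_sub_int, ← Function.iterate_add_apply]
  have hvj : g^[j] (g^[q] x - p) + k = g^[j + q] x - (p - k : ℤ) := by
    rw [iterate_sub_int, ← Function.iterate_add_apply]
    push_cast
    ring
  dsimp only
  rw [hui, huj, hvi, hvj]
  rcases le_abs.1 hgap with hlt | hlt
  · apply disjoint_uIoo_of_le <;> apply horder <;> push_cast <;> linarith
  · apply Disjoint.symm
    apply disjoint_uIoo_of_le <;> apply horder <;> push_cast <;> linarith

end NonoverlappingArcs

section CrossRatio

/-- The cross-ratio of four points of the line, normalised so that it lies in `(0, 1)` when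
`a < b < c < d`. -/
def crossRatio (a b c d : ℝ) : ℝ := (b - a) * (d - c) / ((c - a) * (d - b))

variable {a b c d : ℝ}

lemma crossRatio_pos (hab : a < b) (hbc : b < c) (hcd : c < d) : 0 < crossRatio a b c d :=
  div_pos (mul_pos (by linarith) (by linarith)) (mul_pos (by linarith) (by linarith))

lemma crossRatio_rev (a b c d : ℝ) : crossRatio d c b a = crossRatio a b c d := by
  rw [crossRatio, crossRatio, ← neg_sub d b, ← neg_sub c a, ← neg_sub b a, ← neg_sub d c]
  ring

lemma crossRatio_add_const (a b c d k : ℝ) :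
    crossRatio (a + k) (b + k) (c + k) (d + k) = crossRatio a b c d := by
  simp only [crossRatio, add_sub_add_right_eq_sub]

lemma crossRatio_neg (a b c d : ℝ) : crossRatio (-a) (-b) (-c) (-d) = crossRatio a b c d := by
  simp only [crossRatio, neg_sub_neg]
  rw [← neg_sub b a, ← neg_sub d c, ← neg_sub c a, ← neg_sub d b, neg_mul_neg, neg_mul_neg]

lemma one_sub_crossRatio (hac : a ≠ c) (hbd : b ≠ d) :
    1 - crossRatio a b c d = (d - a) * (c - b) / ((c - a) * (d - b)) := by
  have hca := sub_ne_zero.2 hac.symm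
  have hdb := sub_ne_zero.2 hbd.symm
  rw [crossRatio]
  field_simp
  ring

lemma crossRatio_image (F : ℝ → ℝ) (hab : a < b) (hbc : b < c) (hcd : c < d) :
    crossRatio (F a) (F b) (F c) (F d) =
      slope F a b * slope F c d / (slope F a c * slope F b d) * crossRatio a b c d := by
  have hba := (sub_pos.2 hab).ne'
  have hdc := (sub_pos.2 hcd).ne'
  have hca := (sub_pos.2 (hab.trans hbc)).ne'
  have hdb := (sub_pos.2 (hbc.trans hcd)).ne'
  simp only [crossRatio, slope_def_field]
  field_simp

lemma slope_pos_of_strictMono {F : ℝ → ℝ} (hF : StrictMono F) {x y : ℝ} (hxy : x < y) :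
    0 < slope F x y := by
  rw [slope_def_field]
  exact div_pos (sub_pos.2 (hF hxy)) (sub_pos.2 hxy)

end CrossRatio

section Schwarzian

variable {F : ℝ → ℝ} {x y : ℝ}

lemma convexOn_inv_sqrt_deriv (hF : ContDiff ℝ 3 F) (hpos : ∀ t ∈ Icc x y, 0 < deriv F t)
    (hS : ∀ t ∈ Icc x y, schwarzianDeriv F t ≤ 0) :
    ConvexOn ℝ (Icc x y) fun t => (√(deriv F t))⁻¹ := by
  have hF₁ : ContDiff ℝ 2 (deriv F) := hF.deriv'
  have hF₂ : ContDiff ℝ 1 (deriv (deriv F)) := hF₁.deriv'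
  set φ : ℝ → ℝ := fun t => (√(deriv F t))⁻¹
  set ν : ℝ → ℝ := fun t => deriv (deriv F) t / deriv F t
  have hφ : ∀ t ∈ Icc x y, HasDerivAt φ (-(1 / 2) * ν t * φ t) t := by
    intro t ht
    have ht₀ := hpos t ht
    have hsqrt := (Real.sqrt_pos.2 ht₀).ne'
    refine (((hF₁.differentiable (by norm_num) t).hasDerivAt.sqrt ht₀.ne').inv hsqrt).congr_deriv ?_
    simp only [φ, ν]
    rw [Real.sq_sqrt ht₀.le]
    field_simp
  have hν : ∀ t ∈ Icc x y, HasDerivAt ν (deriv ν t) t := fun t ht =>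
    ((hF₂.differentiable (by norm_num) t).div (hF₁.differentiable (by norm_num) t)
      (hpos t ht).ne').hasDerivAt
  have hφ₂ : ∀ t ∈ Icc x y, HasDerivAt (fun s => -(1 / 2) * ν s * φ s)
      (-(1 / 2) * φ t * schwarzianDeriv F t) t := by
    intro t ht
    refine (((hν t ht).const_mul (-(1 / 2))).mul (hφ t ht)).congr_deriv ?_
    simp only [schwarzianDeriv, ν]
    ring
  refine convexOn_of_hasDerivWithinAt2_nonneg (convex_Icc x y)
    (fun t ht => (hφ t ht).continuousAt.continuousWithinAt)
    (fun t ht => (hφ t (interior_subset ht)).hasDerivWithinAt)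
    (fun t ht => (hφ₂ t (interior_subset ht)).hasDerivWithinAt) fun t ht => ?_
  have hφ₀ : 0 ≤ φ t := inv_nonneg.2 (Real.sqrt_nonneg _)
  nlinarith [hS t (interior_subset ht)]

lemma le_chord_of_convexOn {s : Set ℝ} {φ : ℝ → ℝ} (hφ : ConvexOn ℝ s φ) (hx : x ∈ s)
    (hy : y ∈ s) (hxy : x < y) {t : ℝ} (ht : t ∈ Icc x y) :
    φ t ≤ φ x + slope φ x y * (t - x) := by
  have hyx := sub_pos.2 hxy
  have hconv := hφ.2 hx hy (div_nonneg (sub_nonneg.2 ht.2) hyx.le)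
    (div_nonneg (sub_nonneg.2 ht.1) hyx.le) (by field_simp; ring)
  have hcomb : (y - t) / (y - x) * x + (t - x) / (y - x) * y = t := by
    field_simp
    ring
  simp only [smul_eq_mul, hcomb] at hconv
  refine hconv.trans_eq ?_
  rw [slope_def_field]
  field_simp
  ring

lemma hasDerivAt_div_mul_affine {A k t : ℝ} (hA : A ≠ 0) (ht : A + k * (t - x) ≠ 0) :
    HasDerivAt (fun t => (t - x) / (A * (A + k * (t - x)))) ((A + k * (t - x)) ^ 2)⁻¹ t := by
  have hsub : HasDerivAt (fun t : ℝ => t - x) 1 t := (hasDerivAt_id t).sub_const x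
  have hden : HasDerivAt (fun t => A * (A + k * (t - x))) (A * k) t := by
    simpa using ((hsub.const_mul k).const_add A).const_mul A
  refine (hsub.div hden (mul_ne_zero hA ht)).congr_deriv ?_
  field_simp
  ring

/-- With `φ = (F')^(-1/2)` below its chord `ℓ`, the derivative `F' = φ⁻²` dominates `ℓ⁻²`, which is
the derivative of a Möbius map taking the value `√(F' x) * √(F' y) * (y - x)` at `y`. -/
lemma sqrt_deriv_mul_sqrt_deriv_le_slope (hF : Differentiable ℝ F) (hxy : x < y)
    (hpos : ∀ t ∈ Icc x y, 0 < deriv F t)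
    (hconv : ConvexOn ℝ (Icc x y) fun t => (√(deriv F t))⁻¹) :
    √(deriv F x) * √(deriv F y) ≤ slope F x y := by
  set φ : ℝ → ℝ := fun t => (√(deriv F t))⁻¹
  set ℓ : ℝ → ℝ := fun t => φ x + slope φ x y * (t - x)
  have hxI := left_mem_Icc.2 hxy.le
  have hyI := right_mem_Icc.2 hxy.le
  have hφ_pos : ∀ t ∈ Icc x y, 0 < φ t := fun t ht => inv_pos.2 (Real.sqrt_pos.2 (hpos t ht))
  have hφℓ : ∀ t ∈ Icc x y, φ t ≤ ℓ t := fun t ht => le_chord_of_convexOn hconv hxI hyI hxy ht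
  have hderiv : ∀ t ∈ Icc x y, HasDerivAt (fun t => F t - (t - x) / (φ x * ℓ t))
      (deriv F t - (ℓ t ^ 2)⁻¹) t := fun t ht =>
    (hF t).hasDerivAt.sub <| hasDerivAt_div_mul_affine (hφ_pos x hxI).ne'
      ((hφ_pos t ht).trans_le (hφℓ t ht)).ne'
  have hmono : MonotoneOn (fun t => F t - (t - x) / (φ x * ℓ t)) (Icc x y) := by
    refine monotoneOn_of_hasDerivWithinAt_nonneg (convex_Icc x y)
      (fun t ht => (hderiv t ht).continuousAt.continuousWithinAt)
      (fun t ht => (hderiv t (interior_subset ht)).hasDerivWithinAt) fun t ht => ?_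
    have ht' := interior_subset ht
    have hsq : deriv F t = (φ t ^ 2)⁻¹ := by
      simp only [φ, inv_pow, inv_inv, Real.sq_sqrt (hpos t ht').le]
    rw [hsq, sub_nonneg]
    exact inv_anti₀ (pow_pos (hφ_pos t ht') 2) (pow_le_pow_left₀ (hφ_pos t ht').le (hφℓ t ht') 2)
  have hℓy : ℓ y = φ y := by
    simp only [ℓ, slope_def_field]
    field_simp [(sub_pos.2 hxy).ne']
    ring
  have hend := hmono hxI hyI hxy.le
  simp only [hℓy, sub_self, zero_div, sub_zero] at hend
  rw [slope_def_field, le_div_iff₀ (sub_pos.2 hxy)]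
  calc √(deriv F x) * √(deriv F y) * (y - x) = (y - x) / (φ x * φ y) := by
        simp only [φ]
        field_simp
    _ ≤ F y - F x := by linarith

lemma deriv_mul_deriv_le_slope_sq (hF : ContDiff ℝ 3 F) (hxy : x < y)
    (hpos : ∀ t ∈ Icc x y, 0 < deriv F t) (hS : ∀ t ∈ Icc x y, schwarzianDeriv F t ≤ 0) :
    deriv F x * deriv F y ≤ slope F x y ^ 2 := by
  have hsqrt := sqrt_deriv_mul_sqrt_deriv_le_slope (hF.differentiable (by norm_num)) hxy hpos
    (convexOn_inv_sqrt_deriv hF hpos hS)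
  calc deriv F x * deriv F y = (√(deriv F x) * √(deriv F y)) ^ 2 := by
        rw [mul_pow, Real.sq_sqrt (hpos x (left_mem_Icc.2 hxy.le)).le,
          Real.sq_sqrt (hpos y (right_mem_Icc.2 hxy.le)).le]
    _ ≤ slope F x y ^ 2 := pow_le_pow_left₀ (by positivity) hsqrt 2

lemma monotoneOn_deriv_div_sub_inv {s : Set ℝ} (hs : s.OrdConnected) (hF : Differentiable ℝ F)
    (hmono : StrictMono F) (hx : ∀ y ∈ s, x < y)
    (hgeo : ∀ y ∈ s, deriv F x * deriv F y ≤ slope F x y ^ 2) :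
    MonotoneOn (fun y => deriv F x / (F y - F x) - (y - x)⁻¹) s := by
  have hderiv : ∀ y ∈ s, HasDerivAt (fun y => deriv F x / (F y - F x) - (y - x)⁻¹)
      (((y - x) ^ 2)⁻¹ - deriv F x * deriv F y / (F y - F x) ^ 2) y := by
    intro y hy
    have hFyx := (sub_pos.2 (hmono (hx y hy))).ne'
    have hyx := (sub_pos.2 (hx y hy)).ne'
    refine (((hasDerivAt_const y (deriv F x)).div ((hF y).hasDerivAt.sub_const (F x)) hFyx).sub
      (((hasDerivAt_id y).sub_const x).inv hyx)).congr_deriv ?_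
    simp only [id]
    field_simp
    ring
  refine monotoneOn_of_hasDerivWithinAt_nonneg hs.convex
    (fun y hy => (hderiv y hy).continuousAt.continuousWithinAt)
    (fun y hy => (hderiv y (interior_subset hy)).hasDerivWithinAt) fun y hy => ?_
  have hy' := interior_subset hy
  have hFyx := sub_pos.2 (hmono (hx y hy'))
  have hyx := sub_pos.2 (hx y hy')
  have hgeo' := hgeo y hy'
  rw [slope_def_field, div_pow, le_div_iff₀ (by positivity)] at hgeo'
  rw [sub_nonneg, ← one_div, div_le_div_iff₀ (by positivity) (by positivity)]
  linarith

lemma hasDerivAt_log_slope_left {t : ℝ} (hF : DifferentiableAt ℝ F t) (hmono : StrictMono F)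
    (hty : t < y) : HasDerivAt (fun t => Real.log (slope F t y))
      (-(deriv F t / (F y - F t) - (y - t)⁻¹)) t := by
  have hFyt := (sub_pos.2 (hmono hty)).ne'
  have hyt := (sub_pos.2 hty).ne'
  have hslope : HasDerivAt (fun t => (F y - F t) / (y - t)) _ t :=
    (hF.hasDerivAt.const_sub (F y)).div ((hasDerivAt_id t).const_sub y) hyt
  simp only [slope_def_field]
  refine (hslope.log (div_ne_zero hFyt hyt)).congr_deriv ?_
  field_simp
  ring

variable {a b c d : ℝ}

lemma slope_mul_slope_le (hF : Differentiable ℝ F) (hmono : StrictMono F) (hab : a < b)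
    (hbc : b < c) (hcd : c < d)
    (hgeo : ∀ x y, a ≤ x → x < y → y ≤ d → deriv F x * deriv F y ≤ slope F x y ^ 2) :
    slope F a c * slope F b d ≤ slope F a d * slope F b c := by
  have hpos : ∀ {t y}, t ∈ Icc a b → c ≤ y → 0 < slope F t y := fun ht hy =>
    slope_pos_of_strictMono hmono (ht.2.trans_lt (hbc.trans_le hy))
  have hderiv : ∀ y, c ≤ y → ∀ t ∈ Icc a b, HasDerivAt (fun t => Real.log (slope F t y))
      (-(deriv F t / (F y - F t) - (y - t)⁻¹)) t := fun y hy t ht =>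
    hasDerivAt_log_slope_left (hF t) hmono (ht.2.trans_lt (hbc.trans_le hy))
  have hdiff : MonotoneOn (fun t => Real.log (slope F t c) - Real.log (slope F t d)) (Icc a b) := by
    refine monotoneOn_of_hasDerivWithinAt_nonneg (convex_Icc a b)
      (fun t ht =>
        ((hderiv c le_rfl t ht).sub (hderiv d hcd.le t ht)).continuousAt.continuousWithinAt)
      (fun t ht => ((hderiv c le_rfl t (interior_subset ht)).sub
        (hderiv d hcd.le t (interior_subset ht))).hasDerivWithinAt) fun t ht => ?_
    have ht' := interior_subset ht
    have := monotoneOn_deriv_div_sub_inv ordConnected_Icc hF hmono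
      (fun y (hy : y ∈ Icc c d) => ht'.2.trans_lt (hbc.trans_le hy.1))
      (fun y hy => hgeo t y ht'.1 (ht'.2.trans_lt (hbc.trans_le hy.1)) hy.2)
      (left_mem_Icc.2 hcd.le) (right_mem_Icc.2 hcd.le) hcd.le
    linarith
  have haI := left_mem_Icc.2 hab.le
  have hbI := right_mem_Icc.2 hab.le
  have hlog := hdiff haI hbI hab.le
  rw [← Real.log_le_log_iff (mul_pos (hpos haI le_rfl) (hpos hbI hcd.le))
      (mul_pos (hpos haI hcd.le) (hpos hbI le_rfl)),
    Real.log_mul (hpos haI le_rfl).ne' (hpos hbI hcd.le).ne',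
    Real.log_mul (hpos haI hcd.le).ne' (hpos hbI le_rfl).ne']
  simp only at hlog
  linarith

lemma crossRatio_image_le_of_schwarzianDeriv_nonpos (hF : ContDiff ℝ 3 F) (hmono : StrictMono F)
    (hab : a < b) (hbc : b < c) (hcd : c < d) (hpos : ∀ t ∈ Icc a d, 0 < deriv F t)
    (hS : ∀ t ∈ Icc a d, schwarzianDeriv F t ≤ 0) :
    crossRatio (F a) (F b) (F c) (F d) ≤ crossRatio a b c d := by
  have hgeo : ∀ x y, a ≤ x → x < y → y ≤ d → deriv F x * deriv F y ≤ slope F x y ^ 2 :=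
    fun x y hax hxy hyd => deriv_mul_deriv_le_slope_sq hF hxy
      (fun t ht => hpos t (Icc_subset_Icc hax hyd ht)) fun t ht => hS t (Icc_subset_Icc hax hyd ht)
  have hslope := slope_mul_slope_le (hF.differentiable (by norm_num)) hmono hab hbc hcd hgeo
  have hac := hab.trans hbc
  have hbd := hbc.trans hcd
  have := sub_pos.2 hac
  have := sub_pos.2 hbd
  have := sub_pos.2 hbc
  have := sub_pos.2 (hac.trans hcd)
  have := sub_pos.2 (hmono hac)
  have := sub_pos.2 (hmono hbd)
  rw [← sub_le_sub_iff_left 1, one_sub_crossRatio hac.ne hbd.ne,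
    one_sub_crossRatio (hmono hac).ne (hmono hbd).ne,
    div_le_div_iff₀ (by positivity) (by positivity)]
  simp only [slope_def_field, div_mul_div_comm] at hslope
  rw [div_le_div_iff₀ (by positivity) (by positivity)] at hslope
  linarith

end Schwarzian

section Distortion

/-- Bounded distortion from above: on every interval `[x, y]` with endpoints in `s`, the derivative
of `F` is at most `K` times the mean derivative. Unlike two-sided distortion bounds, this can hold
across critical points of `F`. -/
def DerivLeSlopeOn (F : ℝ → ℝ) (K : ℝ) (s : Set ℝ) : Prop :=
  ∀ x ∈ s, ∀ y ∈ s, x < y → ∀ t ∈ Icc x y, deriv F t ≤ K * slope F x y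

variable {F : ℝ → ℝ} {s : Set ℝ}

lemma DerivLeSlopeOn.slope_le_mul_slope {K : ℝ} (h : DerivLeSlopeOn F K s)
    (hF : Differentiable ℝ F) {x y u v : ℝ} (hx : x ∈ s) (hy : y ∈ s) (hxu : x ≤ u) (huv : u < v)
    (hvy : v ≤ y) : slope F u v ≤ K * slope F x y := by
  obtain ⟨t, ht, ht'⟩ := exists_deriv_eq_slope' F huv hF.continuous.continuousOn hF.differentiableOn
  rw [← ht']
  exact h x hx y hy (hxu.trans_lt (huv.trans_le hvy)) t ⟨hxu.trans ht.1.le, ht.2.le.trans hvy⟩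

lemma DerivLeSlopeOn.crossRatio_image_le {K : ℝ} (h : DerivLeSlopeOn F K s)
    (hF : Differentiable ℝ F) (hmono : StrictMono F) {a b c d : ℝ} (ha : a ∈ s) (hb : b ∈ s)
    (hc : c ∈ s) (hd : d ∈ s) (hab : a < b) (hbc : b < c) (hcd : c < d) :
    crossRatio (F a) (F b) (F c) (F d) ≤ K ^ 2 * crossRatio a b c d := by
  have hac := slope_pos_of_strictMono hmono (hab.trans hbc)
  have hbd := slope_pos_of_strictMono hmono (hbc.trans hcd)
  have hleft := h.slope_le_mul_slope hF ha hc le_rfl hab hbc.le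
  have hright := h.slope_le_mul_slope hF hb hd hbc.le hcd le_rfl
  rw [crossRatio_image F hab hbc hcd]
  refine mul_le_mul_of_nonneg_right ?_ (crossRatio_pos hab hbc hcd).le
  rw [div_le_iff₀ (mul_pos hac hbd)]
  calc slope F a b * slope F c d ≤ (K * slope F a c) * (K * slope F b d) :=
        mul_le_mul hleft hright (slope_pos_of_strictMono hmono hcd).le
          ((slope_pos_of_strictMono hmono hab).le.trans hleft)
    _ = K ^ 2 * (slope F a c * slope F b d) := by ring

lemma derivLeSlopeOn_of_deriv_le_mul_deriv (hF : Differentiable ℝ F) (hs : s.OrdConnected) {K : ℝ}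
    (h : ∀ t ∈ s, ∀ u ∈ s, deriv F t ≤ K * deriv F u) : DerivLeSlopeOn F K s := by
  intro x hx y hy hxy t ht
  obtain ⟨u, hu, hu'⟩ := exists_deriv_eq_slope' F hxy hF.continuous.continuousOn hF.differentiableOn
  rw [← hu']
  exact h t (hs.out hx hy ht) u (hs.out hx hy (Ioo_subset_Icc_self hu))

lemma deriv_le_exp_mul_deriv (hF : Differentiable ℝ (deriv F)) {a d m M : ℝ} (hm : 0 < m)
    (hlow : ∀ t ∈ Icc a d, m ≤ deriv F t) (hup : ∀ t ∈ Icc a d, |deriv (deriv F) t| ≤ M) :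
    ∀ t ∈ Icc a d, ∀ u ∈ Icc a d, deriv F t ≤ Real.exp (M / m * (d - a)) * deriv F u := by
  intro t ht u hu
  have hM : 0 ≤ M := (abs_nonneg _).trans (hup t ht)
  have hmean : deriv F t - deriv F u ≤ M * |t - u| := (le_abs_self _).trans <|
    (convex_Icc a d).norm_image_sub_le_of_norm_deriv_le (fun x _ => hF x) hup hu ht
  have htu : |t - u| ≤ d - a := abs_sub_le_of_le_of_le ht.1 ht.2 hu.1 hu.2
  calc deriv F t ≤ M * (d - a) + deriv F u := by
        linarith [mul_le_mul_of_nonneg_left htu hM]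
    _ ≤ M / m * (d - a) * deriv F u + deriv F u := by
        have hle : M * (d - a) * m ≤ M * (d - a) * deriv F u :=
          mul_le_mul_of_nonneg_left (hlow u hu) (mul_nonneg hM ((abs_nonneg _).trans htu))
        rw [div_mul_eq_mul_div, div_mul_eq_mul_div, add_le_add_iff_right, le_div_iff₀ hm]
        exact hle
    _ = (M / m * (d - a) + 1) * deriv F u := by ring
    _ ≤ Real.exp (M / m * (d - a)) * deriv F u :=
        mul_le_mul_of_nonneg_right (Real.add_one_le_exp _) (hm.le.trans (hlow u hu))

lemma exists_quarter_far_from (c : ℝ) {x y : ℝ} (hxy : x < y) :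
    ∃ u v, x ≤ u ∧ v ≤ y ∧ v - u = (y - x) / 4 ∧
      ∀ t ∈ Icc u v, max |x - c| |y - c| ≤ 2 * |t - c| := by
  have hlen : y - x ≤ |x - c| + |y - c| := by
    linarith [neg_abs_le (x - c), le_abs_self (y - c)]
  rcases le_total |x - c| |y - c| with hle | hle
  · refine ⟨y - (y - x) / 4, y, by linarith, le_rfl, by ring, fun t ht => ?_⟩
    have htri := abs_sub_le y t c
    rw [abs_of_nonneg (sub_nonneg.2 ht.2)] at htri
    rw [max_eq_right hle]
    linarith [ht.1]
  · refine ⟨x, x + (y - x) / 4, le_rfl, by linarith, by ring, fun t ht => ?_⟩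
    have htri := abs_sub_le x t c
    rw [abs_of_nonpos (sub_nonpos.2 ht.1)] at htri
    rw [max_eq_left hle]
    linarith [ht.2]

lemma derivLeSlopeOn_of_power_law (hF : Differentiable ℝ F) (hmono : Monotone F)
    (hs : s.OrdConnected) {c r α β : ℝ} (hr : 0 ≤ r) (hα : 0 < α) (hβ : 0 ≤ β)
    (hlow : ∀ x ∈ s, α * |x - c| ^ r ≤ deriv F x) (hup : ∀ x ∈ s, deriv F x ≤ β * |x - c| ^ r) :
    DerivLeSlopeOn F (4 * 2 ^ r * β / α) s := by
  intro x hx y hy hxy t ht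
  set M := max |x - c| |y - c|
  have hM : 0 ≤ M := (abs_nonneg _).trans (le_max_left _ _)
  obtain ⟨u, v, hxu, hvy, huv, hfar⟩ := exists_quarter_far_from c hxy
  have hderiv_low : ∀ z ∈ interior (Icc u v), α * (M ^ r / 2 ^ r) ≤ deriv F z := fun z hz => by
    have hz := interior_subset hz
    refine le_trans ?_ (hlow z (hs.out hx hy ⟨hxu.trans hz.1, hz.2.trans hvy⟩))
    rw [← Real.div_rpow hM zero_le_two]
    gcongr
    linarith [hfar z hz]
  have hquarter : α * (M ^ r / 2 ^ r) * ((y - x) / 4) ≤ F v - F u := by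
    rw [← huv]
    exact (convex_Icc u v).mul_sub_le_image_sub_of_le_deriv hF.continuous.continuousOn
      hF.differentiableOn hderiv_low u (left_mem_Icc.2 (by linarith)) v
      (right_mem_Icc.2 (by linarith)) (by linarith)
  have hslope : α * (M ^ r / 2 ^ r) / 4 ≤ slope F x y := by
    rw [slope_def_field, le_div_iff₀ (sub_pos.2 hxy)]
    linarith [hmono hxu, hmono hvy]
  have htc : |t - c| ≤ M :=
    abs_le_max_abs_abs (sub_le_sub_right ht.1 c) (sub_le_sub_right ht.2 c)
  calc deriv F t ≤ β * |t - c| ^ r := hup t (hs.out hx hy ht)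
    _ ≤ β * M ^ r := by gcongr
    _ = 4 * 2 ^ r * β / α * (α * (M ^ r / 2 ^ r) / 4) := by field_simp
    _ ≤ 4 * 2 ^ r * β / α * slope F x y := by gcongr

end Distortion

lemma exists_forall_abs_le_of_periodic {g : ℝ → ℝ} {T : ℝ} (hg : Function.Periodic g T)
    (hT : T ≠ 0) (hcont : Continuous g) : ∃ M, ∀ x, |g x| ≤ M := by
  obtain ⟨M, hM⟩ := isBounded_iff_forall_norm_le.1 (hg.isBounded_of_continuous hT hcont)
  exact ⟨M, fun x => hM _ (mem_range_self x)⟩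

lemma exists_forall_le_of_periodic {g : ℝ → ℝ} {T : ℝ} (hg : Function.Periodic g T)
    (hT : T ≠ 0) (hcont : Continuous g) : ∃ x, ∀ y, g x ≤ g y := by
  obtain ⟨_, ⟨x, rfl⟩, hx⟩ :=
    (hg.compact_of_continuous hT hcont).exists_isLeast (range_nonempty g)
  exact ⟨x, fun y => hx (mem_range_self y)⟩

section ConsecutiveGaps

lemma exists_orbit_displacement_min {G : ℝ → ℝ} (hG : Continuous G)
    (hper : Function.Periodic (fun x => G x - x) 1) (N : ℕ) :
    ∃ x : ℕ → ℝ, (∀ j, x (j + 1) = G (x j)) ∧ ∀ j, |x (N + 1) - x N| ≤ |x (j + 1) - x j| := by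
  obtain ⟨M, hM⟩ := exists_forall_abs_le_of_periodic hper one_ne_zero (by fun_prop)
  have hsurj : Function.Surjective G :=
    hG.surjective
      (tendsto_atTop_mono (fun x => by rw [id]; linarith [neg_le_of_abs_le (hM x)])
        (tendsto_atTop_add_const_right atTop (-M) tendsto_id))
      (tendsto_atBot_mono (fun x => by rw [id]; linarith [le_of_abs_le (hM x)])
        (tendsto_atBot_add_const_right atBot M tendsto_id))
  have hperabs : Function.Periodic (fun x => |G x - x|) 1 := fun x => congrArg abs (hper x)
  obtain ⟨y, hy⟩ := exists_forall_le_of_periodic hperabs one_ne_zero (by fun_prop)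
  obtain ⟨x₀, rfl⟩ := hsurj.iterate N y
  refine ⟨fun j => G^[j] x₀, fun j => Function.iterate_succ_apply' G j x₀, fun j => ?_⟩
  simp only [Function.iterate_succ_apply']
  exact hy _

lemma mul_le_of_crossRatio_le {a b c d e B : ℝ} (hab : a < b) (hbc : b < c) (hcd : c < d)
    (hde : d < e) (hB : 0 ≤ B) (h : crossRatio b c d e ≤ B * crossRatio a b c d) :
    (c - b) * (e - d) ≤ B * ((d - c) * ((d - c) + (e - d))) := by
  have hdb : 0 < d - b := by linarith
  have hec : 0 < e - c := by linarith
  have hle : crossRatio a b c d ≤ (d - c) / (d - b) := by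
    rw [crossRatio, mul_div_mul_comm]
    exact mul_le_of_le_one_left (div_nonneg (by linarith) hdb.le)
      ((div_le_one (by linarith)).2 (by linarith))
  have h' := h.trans (mul_le_mul_of_nonneg_left hle hB)
  rw [crossRatio, ← mul_div_assoc, div_le_div_iff₀ (mul_pos hdb hec) hdb] at h'
  refine le_of_mul_le_mul_right (h'.trans_eq ?_) hdb
  ring

lemma abs_sub_mul_abs_sub_le_of_crossRatio_le {x : ℕ → ℝ} {B : ℝ}
    (hx : StrictMono x ∨ StrictAnti x) (hB : 0 ≤ B) (j : ℕ)
    (h : crossRatio (x (j + 1)) (x (j + 2)) (x (j + 3)) (x (j + 4)) ≤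
      B * crossRatio (x j) (x (j + 1)) (x (j + 2)) (x (j + 3))) :
    |x (j + 2) - x (j + 1)| * |x (j + 4) - x (j + 3)| ≤
      B * (|x (j + 3) - x (j + 2)| * (|x (j + 3) - x (j + 2)| + |x (j + 4) - x (j + 3)|)) := by
  wlog hmono : StrictMono x generalizing x
  · have hanti := hx.resolve_left hmono
    simpa only [Pi.neg_apply, neg_sub_neg, abs_sub_comm] using
      this (x := -x) (.inl hanti.neg) (by simpa only [Pi.neg_apply, crossRatio_neg] using h)
        hanti.neg
  have hlt : ∀ i, x i < x (i + 1) := fun i => hmono i.lt_succ_self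
  have habs : ∀ i, |x (i + 1) - x i| = x (i + 1) - x i := fun i =>
    abs_of_pos (sub_pos.2 (hlt i))
  rw [habs, habs, habs]
  exact mul_le_of_crossRatio_le (hlt _) (hlt _) (hlt _) (hlt _) hB h

lemma exists_forall_le_mul_of_mul_le {B : ℝ} (hB : 1 ≤ B) (N : ℕ) :
    ∃ C > 1, ∀ d : ℕ → ℝ, (∀ j, 0 < d j) → (∀ j, d N ≤ d j) →
      (∀ j, d (j + 1) * d (j + 3) ≤ B * (d (j + 2) * (d (j + 2) + d (j + 3)))) →
      ∀ i, 1 ≤ i → i ≤ N → d i ≤ C * d N := by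
  suffices ∀ k, ∃ L > 1, ∀ d : ℕ → ℝ, (∀ j, 0 < d j) → (∀ j, d N ≤ d j) →
      (∀ j, d (j + 1) * d (j + 3) ≤ B * (d (j + 2) * (d (j + 2) + d (j + 3)))) →
      ∀ i, 1 ≤ i → i ≤ N → N ≤ i + k → d i ≤ L * d N by
    obtain ⟨C, hC, h⟩ := this N
    exact ⟨C, hC, fun d hpos hmin hmul i h₁ hi => h d hpos hmin hmul i h₁ hi (by omega)⟩
  intro k
  induction k with
  | zero =>
    refine ⟨2, one_lt_two, fun d hpos _ _ i _ hi hik => ?_⟩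
    rw [le_antisymm hi hik]
    linarith [hpos N]
  | succ k ih =>
    obtain ⟨L, hL, ih⟩ := ih
    have hL' : L ≤ B * (L * (L + 1)) := by nlinarith [mul_self_nonneg L]
    refine ⟨B * (L * (L + 1)), hL.trans_le hL', fun d hpos hmin hmul i h₁ hi hik => ?_⟩
    rcases le_or_gt N (i + k) with hle | hgt
    · exact (ih d hpos hmin hmul i h₁ hi hle).trans (mul_le_mul_of_nonneg_right hL' (hpos N).le)
    obtain ⟨j, rfl⟩ := Nat.exists_eq_add_of_le' h₁
    have hnext : d (j + 2) ≤ L * d N := ih d hpos hmin hmul (j + 2) (by omega) (by omega) (by omega)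
    refine le_of_mul_le_mul_right ?_ (hpos (j + 3))
    calc d (j + 1) * d (j + 3) ≤ B * (d (j + 2) * (d (j + 2) + d (j + 3))) := hmul j
      _ ≤ B * (L * d N * (L * d (j + 3) + d (j + 3))) := by
        have := hpos (j + 2)
        have := hpos (j + 3)
        have := hpos N
        have : d (j + 2) ≤ L * d (j + 3) :=
          hnext.trans (mul_le_mul_of_nonneg_left (hmin _) (by linarith))
        gcongr
      _ = B * (L * (L + 1)) * d N * d (j + 3) := by ring

lemma inv_le_div_and_div_le {m C u v : ℝ} (hm : 0 < m) (hu : m ≤ u) (huC : u ≤ C * m) (hv : m ≤ v)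
    (hvC : v ≤ C * m) : C⁻¹ ≤ u / v ∧ u / v ≤ C := by
  have hC : 0 < C := pos_of_mul_pos_left (hm.trans_le (hu.trans huC)) hm.le
  have hv₀ := hm.trans_le hv
  constructor
  · rw [inv_le_iff_one_le_mul₀ hC, div_mul_eq_mul_div, one_le_div hv₀]
    nlinarith
  · rw [div_le_iff₀ hv₀]
    nlinarith

end ConsecutiveGaps

namespace MCM

variable (f : MCM)

/-- The lift of `f` as an element of the monoid of degree-one monotone maps. -/
def toCircleDeg1Lift : CircleDeg1Lift := ⟨⟨f.F, f.mono.monotone⟩, f.deg1⟩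

lemma translationNumber_toCircleDeg1Lift {ρ : ℝ} (hrot : HasRotationNumber f.F ρ) :
    CircleDeg1Lift.translationNumber f.toCircleDeg1Lift = ρ := by
  refine tendsto_nhds_unique (CircleDeg1Lift.tendsto_translation_number₀ _) ?_
  simp only [CircleDeg1Lift.coe_pow]
  exact hrot

lemma F_add_int (x : ℝ) (k : ℤ) : f.F (x + k) = f.F x + k := f.toCircleDeg1Lift.map_add_int x k

lemma differentiable : Differentiable ℝ f.F := f.smooth.differentiable (by norm_num)

lemma contDiff_deriv : ContDiff ℝ 2 (deriv f.F) := f.smooth.deriv'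

lemma contDiff_deriv_deriv : ContDiff ℝ 1 (deriv (deriv f.F)) := f.contDiff_deriv.deriv'

lemma deriv_nonneg (x : ℝ) : 0 ≤ deriv f.F x := f.mono.monotone.deriv_nonneg

lemma periodic_deriv : Function.Periodic (deriv f.F) 1 := fun x => by
  rw [← deriv_comp_add_const f.F 1 x]
  simp only [f.deg1, deriv_add_const]

lemma deriv_add_int (x : ℝ) (k : ℤ) : deriv f.F (x + k) = deriv f.F x := by
  simpa using f.periodic_deriv.int_mul k x

lemma periodic_deriv_deriv : Function.Periodic (deriv (deriv f.F)) 1 := fun x => by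
  rw [← deriv_comp_add_const (deriv f.F) 1 x]
  simp only [f.periodic_deriv _]

lemma exists_deriv_le : ∃ M, ∀ x, deriv f.F x ≤ M := by
  obtain ⟨M, hM⟩ :=
    exists_forall_abs_le_of_periodic f.periodic_deriv one_ne_zero f.contDiff_deriv.continuous
  exact ⟨M, fun x => (le_abs_self _).trans (hM x)⟩

lemma exists_deriv_lower_bound_off_critical :
    ∃ m > 0, ∀ x ∈ Icc (0 : ℝ) 1, (∀ j (k : ℤ), x + k ∉ f.W j) → m < deriv f.F x := by
  have hcompact : IsCompact (Icc (0 : ℝ) 1 \ ⋃ (j) (k : ℤ), (· + (k : ℝ)) ⁻¹' f.W j) :=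
    isCompact_Icc.diff <| isOpen_iUnion fun j => isOpen_iUnion fun k =>
      (f.W_open j).preimage (continuous_add_const _)
  obtain ⟨m, hm, hle⟩ := hcompact.exists_forall_le' f.contDiff_deriv.continuous.continuousOn
    (a := 0) fun x hx => (f.deriv_nonneg x).lt_of_ne' fun hzero => by
      obtain ⟨j, k, rfl⟩ := f.critOnly x hzero
      exact hx.2 (mem_iUnion₂.2 ⟨j, -k, by simpa using f.c_mem_W j⟩)
  refine ⟨m / 2, half_pos hm, fun x hx hW => (half_lt_self hm).trans_le (hle x ⟨hx, ?_⟩)⟩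
  simpa using hW

lemma exists_short_interval_dichotomy : ∃ δ > 0, ∃ m > 0, ∀ a d : ℝ, d - a < δ →
    (∃ j, ∃ k : ℤ, Icc (a + k) (d + k) ⊆ f.W j) ∨ ∀ t ∈ Icc a d, m ≤ deriv f.F t := by
  obtain ⟨m, hm, hoff⟩ := f.exists_deriv_lower_bound_off_critical
  let U : Option (Fin f.N × ℤ) → Set ℝ
    | none => {x | m < deriv f.F x}
    | some (j, k) => (· + (k : ℝ)) ⁻¹' f.W j
  have hU : ∀ i, IsOpen (U i)
    | none => isOpen_lt continuous_const f.contDiff_deriv.continuous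
    | some (j, _) => (f.W_open j).preimage (continuous_add_const _)
  have hcover : Icc (0 : ℝ) 1 ⊆ ⋃ i, U i := fun x hx => by
    by_cases hW : ∃ j, ∃ k : ℤ, x + k ∈ f.W j
    · obtain ⟨j, k, hjk⟩ := hW
      exact mem_iUnion.2 ⟨some (j, k), hjk⟩
    · push Not at hW
      exact mem_iUnion.2 ⟨none, hoff x hx hW⟩
  obtain ⟨δ, hδ, hball⟩ := lebesgue_number_lemma_of_metric isCompact_Icc hU hcover
  refine ⟨δ, hδ, m, hm, fun a d had => ?_⟩
  obtain ⟨i, hi⟩ := hball (Int.fract a) ⟨Int.fract_nonneg a, (Int.fract_lt_one a).le⟩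
  have hmem : ∀ t ∈ Icc a d, t - ⌊a⌋ ∈ U i := fun t ht => hi <| by
    rw [Metric.mem_ball, Real.dist_eq, ← Int.self_sub_floor, sub_sub_sub_cancel_right,
      abs_of_nonneg (sub_nonneg.2 ht.1)]
    linarith [ht.2]
  match i with
  | none =>
    right
    intro t ht
    have hlt : m < deriv f.F (t - ⌊a⌋) := hmem t ht
    rw [sub_eq_add_neg, ← Int.cast_neg, f.deriv_add_int] at hlt
    exact hlt.le
  | some (j, k) =>
    left
    refine ⟨j, k - ⌊a⌋, fun t ht => ?_⟩
    have hW : t - (k - ⌊a⌋ : ℤ) - ⌊a⌋ + k ∈ f.W j := hmem _ ⟨by linarith [ht.1], by linarith [ht.2]⟩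
    convert hW using 1
    push_cast
    ring

lemma sub_one_le_F_sub (x y : ℝ) : y - x - 1 ≤ f.F y - f.F x := by
  have hle := f.mono.monotone (show x + ⌊y - x⌋ ≤ y by linarith [Int.floor_le (y - x)])
  rw [f.F_add_int] at hle
  linarith [Int.lt_floor_add_one (y - x)]

lemma exists_slope_lower_bound {δ : ℝ} (hδ : 0 < δ) :
    ∃ σ > 0, ∀ x y, δ ≤ y - x → σ ≤ slope f.F x y := by
  have hperiodic : Function.Periodic (fun x => f.F (x + δ) - f.F x) 1 := fun x => by
    simp only [add_right_comm x 1 δ, f.deg1]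
    ring
  have hcont := f.differentiable.continuous
  obtain ⟨x₀, hx₀⟩ := exists_forall_le_of_periodic hperiodic one_ne_zero (by fun_prop)
  set η := f.F (x₀ + δ) - f.F x₀
  have hη : 0 < η := sub_pos.2 (f.mono (by linarith))
  refine ⟨η / (1 + η), by positivity, fun x y hxy => ?_⟩
  have hηle : η ≤ f.F y - f.F x :=
    (hx₀ x).trans (sub_le_sub_right (f.mono.monotone (by linarith)) _)
  rw [slope_def_field, div_le_div_iff₀ (by positivity) (hδ.trans_le hxy)]
  nlinarith [mul_le_mul_of_nonneg_left (f.sub_one_le_F_sub x y) hη.le]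

lemma exists_derivLeSlopeOn_of_subset_W (j : Fin f.N) :
    ∃ K ≥ 0, ∀ s : Set ℝ, s.OrdConnected → s ⊆ f.W j → DerivLeSlopeOn f.F K s := by
  have hr : 0 < f.s j - 1 := sub_pos.2 (f.s_gt_one j)
  have hβ := (f.al_pos j).trans (f.al_lt_be j)
  have hcrit : ∀ α, α * |f.c j - f.c j| ^ (f.s j - 1) = deriv f.F (f.c j) := fun α => by
    rw [sub_self, abs_zero, Real.zero_rpow hr.ne', mul_zero, f.isCrit j]
  refine ⟨4 * 2 ^ (f.s j - 1) * f.be j / f.al j, ?_, fun s hs hsW => ?_⟩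
  · have := f.al_pos j
    positivity
  refine derivLeSlopeOn_of_power_law (c := f.c j) f.differentiable f.mono.monotone hs hr.le
    (f.al_pos j) hβ.le (fun x hx => ?_) fun x hx => ?_
  · rcases eq_or_ne x (f.c j) with rfl | hne
    · exact (hcrit _).le
    · exact (f.powerLaw j x (hsW hx) hne).1.le
  · rcases eq_or_ne x (f.c j) with rfl | hne
    · exact (hcrit _).ge
    · exact (f.powerLaw j x (hsW hx) hne).2.le

lemma exists_derivLeSlopeOn_univ : ∃ K ≥ 1, DerivLeSlopeOn f.F K univ := by
  obtain ⟨M, hM⟩ := f.exists_deriv_le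
  obtain ⟨δ, hδ, m, hm, hcover⟩ := f.exists_short_interval_dichotomy
  obtain ⟨σ, hσ, hslope⟩ := f.exists_slope_lower_bound hδ
  choose K hK₀ hK using f.exists_derivLeSlopeOn_of_subset_W
  have hM₀ : 0 ≤ M := (f.deriv_nonneg 0).trans (hM 0)
  have hsum : 0 ≤ ∑ j, K j := Finset.sum_nonneg fun j _ => hK₀ j
  have hMσ : 0 ≤ M / σ := by positivity
  have hMm : 0 ≤ M / m := by positivity
  refine ⟨1 + M / σ + M / m + ∑ j, K j, by linarith, fun x _ y _ hxy t ht => ?_⟩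
  have hpos := slope_pos_of_strictMono f.mono hxy
  suffices ∃ κ ≤ 1 + M / σ + M / m + ∑ j, K j, deriv f.F t ≤ κ * slope f.F x y by
    obtain ⟨κ, hκ, hle⟩ := this
    exact hle.trans (mul_le_mul_of_nonneg_right hκ hpos.le)
  rcases le_or_gt δ (y - x) with hlong | hshort
  · refine ⟨M / σ, by linarith, (hM t).trans ?_⟩
    rw [div_mul_eq_mul_div, le_div_iff₀ hσ]
    exact mul_le_mul_of_nonneg_left (hslope x y hlong) hM₀
  rcases hcover x y hshort with ⟨j, k, hW⟩ | hm'
  · refine ⟨K j, ?_, ?_⟩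
    · linarith [Finset.single_le_sum (fun i _ => hK₀ i) (Finset.mem_univ j)]
    · have hle := hK j _ ordConnected_Icc hW (x + k) (left_mem_Icc.2 (by linarith)) (y + k)
        (right_mem_Icc.2 (by linarith)) (by linarith) (t + k)
        ⟨by linarith [ht.1], by linarith [ht.2]⟩
      rwa [f.deriv_add_int, slope_def_field, f.F_add_int, f.F_add_int, add_sub_add_right_eq_sub,
        add_sub_add_right_eq_sub, ← slope_def_field] at hle
  · refine ⟨M / m, by linarith, derivLeSlopeOn_of_deriv_le_mul_deriv f.differentiable
      ordConnected_Icc (fun t _ u hu => ?_) x (left_mem_Icc.2 hxy.le) y (right_mem_Icc.2 hxy.le)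
      hxy t ht⟩
    rw [div_mul_eq_mul_div, le_div_iff₀ hm]
    exact mul_le_mul (hM t) (hm' u hu) hm.le hM₀

lemma crossRatio_image_le_of_subset_W {a b c d : ℝ} {j : Fin f.N} {k : ℤ}
    (hW : Icc (a + k) (d + k) ⊆ f.W j) (hab : a < b) (hbc : b < c) (hcd : c < d)
    (hcrit : ∀ t ∈ Icc a d, deriv f.F t ≠ 0) :
    crossRatio (f.F a) (f.F b) (f.F c) (f.F d) ≤ crossRatio a b c d := by
  have hpos : ∀ t ∈ Icc (a + k) (d + k), 0 < deriv f.F t := fun t ht => by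
    have hne := hcrit (t - k) ⟨by linarith [ht.1], by linarith [ht.2]⟩
    rw [← f.deriv_add_int _ k, sub_add_cancel] at hne
    exact (f.deriv_nonneg t).lt_of_ne' hne
  have hS : ∀ t ∈ Icc (a + k) (d + k), schwarzianDeriv f.F t ≤ 0 := fun t ht => by
    refine (f.negSchwarzian j t (hW ht) ?_).le
    rintro rfl
    exact (hpos _ ht).ne' (f.isCrit j)
  simpa only [f.F_add_int, crossRatio_add_const] using
    crossRatio_image_le_of_schwarzianDeriv_nonpos f.smooth f.mono (add_lt_add_left hab (k : ℝ))
      (add_lt_add_left hbc (k : ℝ)) (add_lt_add_left hcd (k : ℝ)) hpos hS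

lemma crossRatio_image_le_of_le_deriv {a b c d m M : ℝ} (hab : a < b) (hbc : b < c) (hcd : c < d)
    (hm : 0 < m) (hlow : ∀ t ∈ Icc a d, m ≤ deriv f.F t)
    (hM : ∀ t, |deriv (deriv f.F) t| ≤ M) :
    crossRatio (f.F a) (f.F b) (f.F c) (f.F d) ≤
      Real.exp (M / m * (d - a) * 2) * crossRatio a b c d := by
  have hslope : DerivLeSlopeOn f.F (Real.exp (M / m * (d - a))) (Icc a d) :=
    derivLeSlopeOn_of_deriv_le_mul_deriv f.differentiable ordConnected_Icc <|
      deriv_le_exp_mul_deriv (f.contDiff_deriv.differentiable (by norm_num)) hm hlow fun t _ => hM t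
  rw [Real.exp_mul, Real.rpow_two]
  exact hslope.crossRatio_image_le f.differentiable f.mono ⟨le_rfl, by linarith⟩
    ⟨hab.le, by linarith⟩ ⟨by linarith, hcd.le⟩ ⟨by linarith, le_rfl⟩ hab hbc hcd

lemma exists_crossRatio_image_le_exp : ∃ A ≥ 0, ∀ a b c d, a < b → b < c → c < d →
    (∀ t ∈ Icc a d, deriv f.F t ≠ 0) →
    crossRatio (f.F a) (f.F b) (f.F c) (f.F d) ≤ Real.exp (A * (d - a)) * crossRatio a b c d := by
  obtain ⟨δ, hδ, m, hm, hcover⟩ := f.exists_short_interval_dichotomy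
  obtain ⟨K, hK, hslope⟩ := f.exists_derivLeSlopeOn_univ
  obtain ⟨M, hM⟩ := exists_forall_abs_le_of_periodic f.periodic_deriv_deriv one_ne_zero
    f.contDiff_deriv_deriv.continuous
  have hM₀ : 0 ≤ M / m := div_nonneg ((abs_nonneg _).trans (hM 0)) hm.le
  have hK₀ : 0 ≤ Real.log K / δ := div_nonneg (Real.log_nonneg hK) hδ.le
  refine ⟨2 * (M / m) + 2 * (Real.log K / δ), by positivity, fun a b c d hab hbc hcd hcrit => ?_⟩
  have hda : 0 < d - a := by linarith
  suffices ∃ κ ≤ (2 * (M / m) + 2 * (Real.log K / δ)) * (d - a),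
      crossRatio (f.F a) (f.F b) (f.F c) (f.F d) ≤ Real.exp κ * crossRatio a b c d by
    obtain ⟨κ, hκ, hle⟩ := this
    have hCR := crossRatio_pos hab hbc hcd
    exact hle.trans (mul_le_mul_of_nonneg_right (Real.exp_le_exp.2 hκ) hCR.le)
  rcases le_or_gt δ (d - a) with hlong | hshort
  · refine ⟨Real.log K * 2, ?_, ?_⟩
    · have hratio : Real.log K ≤ Real.log K / δ * (d - a) := by
        rw [div_mul_eq_mul_div, le_div_iff₀ hδ]
        exact mul_le_mul_of_nonneg_left hlong (Real.log_nonneg hK)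
      nlinarith [mul_nonneg hM₀ hda.le]
    · rw [Real.exp_mul, Real.exp_log (by linarith), Real.rpow_two]
      exact hslope.crossRatio_image_le f.differentiable f.mono trivial trivial trivial trivial
        hab hbc hcd
  rcases hcover a d hshort with ⟨j, k, hW⟩ | hlow
  · refine ⟨0, by positivity, ?_⟩
    rw [Real.exp_zero, one_mul]
    exact f.crossRatio_image_le_of_subset_W hW hab hbc hcd hcrit
  · exact ⟨M / m * (d - a) * 2, by nlinarith [mul_nonneg hK₀ hda.le],
      f.crossRatio_image_le_of_le_deriv hab hbc hcd hm hlow hM⟩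

open Classical in
/-- The times `i < q` at which the `i`-th image of `[a, b]` contains a critical point of `f`. -/
def critTimes (q : ℕ) (a b : ℝ) : Finset ℕ :=
  {i ∈ Finset.range q | ∃ t ∈ Icc (f.F^[i] a) (f.F^[i] b), deriv f.F t = 0}

lemma card_critTimes_le {q : ℕ} {a b : ℝ} (hab : a < b)
    (h : NonoverlappingModOne (Finset.range q) (f.F^[·] a) (f.F^[·] b)) :
    (f.critTimes q a b).card ≤ f.N * 2 := by
  classical
  have hlt : ∀ i, f.F^[i] a < f.F^[i] b := fun i => f.mono.iterate i hab
  have hsub : f.critTimes q a b ⊆ Finset.univ.biUnion fun j : Fin f.N =>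
      {i ∈ Finset.range q | ∃ k : ℤ, f.c j + k ∈ uIcc (f.F^[i] a) (f.F^[i] b)} := by
    intro i hi
    obtain ⟨hi, t, ht, ht₀⟩ := Finset.mem_filter.1 hi
    obtain ⟨j, k, rfl⟩ := f.critOnly t ht₀
    rw [← uIcc_of_le (hlt i).le] at ht
    exact Finset.mem_biUnion.2 ⟨j, Finset.mem_univ j, Finset.mem_filter.2 ⟨hi, k, ht⟩⟩
  calc _ ≤ _ := Finset.card_le_card hsub
    _ ≤ _ := Finset.card_biUnion_le_card_mul _ _ 2 fun j _ =>
      h.card_filter_mem_uIcc_le_two (fun i _ => (hlt i).ne) (f.c j)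
    _ = f.N * 2 := by rw [Finset.card_univ, Fintype.card_fin]

open Classical in
lemma critTimes_subset_union (q : ℕ) (a b c : ℝ) :
    f.critTimes q a c ⊆ f.critTimes q a b ∪ f.critTimes q b c := by
  intro i hi
  obtain ⟨hi, t, ht, ht₀⟩ := Finset.mem_filter.1 hi
  simp only [critTimes, Finset.mem_union, Finset.mem_filter]
  exact (Icc_subset_Icc_union_Icc ht).imp (fun ht => ⟨hi, t, ht, ht₀⟩) fun ht => ⟨hi, t, ht, ht₀⟩

lemma critTimes_succ_of_exists {q : ℕ} {a b : ℝ}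
    (h : ∃ t ∈ Icc (f.F^[q] a) (f.F^[q] b), deriv f.F t = 0) :
    f.critTimes (q + 1) a b = insert q (f.critTimes q a b) := by
  rw [critTimes, Finset.range_add_one, Finset.filter_insert, if_pos h, critTimes]

lemma critTimes_succ_of_forall {q : ℕ} {a b : ℝ}
    (h : ∀ t ∈ Icc (f.F^[q] a) (f.F^[q] b), deriv f.F t ≠ 0) :
    f.critTimes (q + 1) a b = f.critTimes q a b := by
  rw [critTimes, Finset.range_add_one, Finset.filter_insert, if_neg (by simpa using h), critTimes]

lemma exists_crossRatio_iterate_le_exp_mul_pow : ∃ A ≥ 0, ∃ K ≥ 1, ∀ q a b c d,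
    a < b → b < c → c < d →
    crossRatio (f.F^[q] a) (f.F^[q] b) (f.F^[q] c) (f.F^[q] d) ≤
      Real.exp (A * ∑ i ∈ Finset.range q, (f.F^[i] d - f.F^[i] a)) *
        K ^ (f.critTimes q a d).card * crossRatio a b c d := by
  obtain ⟨A, hA, hexp⟩ := f.exists_crossRatio_image_le_exp
  obtain ⟨K, hK, hslope⟩ := f.exists_derivLeSlopeOn_univ
  refine ⟨A, hA, K ^ 2, one_le_pow₀ hK, fun q a b c d hab hbc hcd => ?_⟩
  induction q with
  | zero => simp [critTimes]
  | succ q ih =>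
    have hab' := f.mono.iterate q hab
    have hbc' := f.mono.iterate q hbc
    have hcd' := f.mono.iterate q hcd
    set E := Real.exp (A * (f.F^[q] d - f.F^[q] a)) with hE
    have hE₁ : 1 ≤ E := Real.one_le_exp (mul_nonneg hA (by linarith))
    have hCR := (crossRatio_pos hab' hbc' hcd').le
    simp only [Function.iterate_succ_apply', Finset.sum_range_succ]
    rw [mul_add, Real.exp_add, ← hE]
    by_cases hcrit : ∃ t ∈ Icc (f.F^[q] a) (f.F^[q] d), deriv f.F t = 0
    · rw [f.critTimes_succ_of_exists hcrit, Finset.card_insert_of_notMem (by simp [critTimes]),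
        pow_succ]
      calc _ ≤ K ^ 2 * crossRatio (f.F^[q] a) (f.F^[q] b) (f.F^[q] c) (f.F^[q] d) :=
            hslope.crossRatio_image_le f.differentiable f.mono trivial trivial trivial trivial
              hab' hbc' hcd'
        _ ≤ E * K ^ 2 * _ :=
            mul_le_mul_of_nonneg_right (le_mul_of_one_le_left (sq_nonneg K) hE₁) hCR
        _ ≤ E * K ^ 2 * _ := mul_le_mul_of_nonneg_left ih (by positivity)
        _ = _ := by ring
    · push Not at hcrit
      rw [f.critTimes_succ_of_forall hcrit]
      calc _ ≤ E * crossRatio (f.F^[q] a) (f.F^[q] b) (f.F^[q] c) (f.F^[q] d) :=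
            hexp _ _ _ _ hab' hbc' hcd' hcrit
        _ ≤ E * _ := mul_le_mul_of_nonneg_left ih (by positivity)
        _ = _ := by ring

lemma exists_crossRatio_iterate_le : ∃ B ≥ 1, ∀ q a b c d, a < b → b < c → c < d →
    NonoverlappingModOne (Finset.range q) (f.F^[·] a) (f.F^[·] b) →
    NonoverlappingModOne (Finset.range q) (f.F^[·] b) (f.F^[·] c) →
    NonoverlappingModOne (Finset.range q) (f.F^[·] c) (f.F^[·] d) →
    crossRatio (f.F^[q] a) (f.F^[q] b) (f.F^[q] c) (f.F^[q] d) ≤ B * crossRatio a b c d := by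
  classical
  obtain ⟨A, hA, K, hK, hle⟩ := f.exists_crossRatio_iterate_le_exp_mul_pow
  refine ⟨Real.exp (A * 3) * K ^ (f.N * 2 + f.N * 2 + f.N * 2),
    one_le_mul_of_one_le_of_one_le (Real.one_le_exp (by positivity)) (one_le_pow₀ hK),
    fun q a b c d hab hbc hcd h₁ h₂ h₃ => (hle q a b c d hab hbc hcd).trans ?_⟩
  have hsum : ∑ i ∈ Finset.range q, (f.F^[i] d - f.F^[i] a) ≤ 3 :=
    calc _ ≤ ∑ i ∈ Finset.range q, (|f.F^[i] b - f.F^[i] a| + |f.F^[i] c - f.F^[i] b| +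
          |f.F^[i] d - f.F^[i] c|) := Finset.sum_le_sum fun i _ => by
            linarith [le_abs_self (f.F^[i] b - f.F^[i] a), le_abs_self (f.F^[i] c - f.F^[i] b),
              le_abs_self (f.F^[i] d - f.F^[i] c)]
      _ ≤ 1 + 1 + 1 := by
        rw [Finset.sum_add_distrib, Finset.sum_add_distrib]
        exact add_le_add (add_le_add h₁.sum_abs_sub_le_one h₂.sum_abs_sub_le_one)
          h₃.sum_abs_sub_le_one
      _ = 3 := by norm_num
  have hcard : (f.critTimes q a d).card ≤ f.N * 2 + f.N * 2 + f.N * 2 :=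
    calc _ ≤ (f.critTimes q a b ∪ f.critTimes q b c ∪ f.critTimes q c d).card :=
          Finset.card_le_card <| (f.critTimes_subset_union q a c d).trans <|
            Finset.union_subset_union_left (f.critTimes_subset_union q a b c)
      _ ≤ _ := (Finset.card_union_le _ _).trans <| Nat.add_le_add_right (Finset.card_union_le _ _) _
      _ ≤ _ := add_le_add (add_le_add (f.card_critTimes_le hab h₁) (f.card_critTimes_le hbc h₂))
          (f.card_critTimes_le hcd h₃)
  have := (crossRatio_pos hab hbc hcd).le
  gcongr

lemma strictMono_or_strictAnti_orbit {ρ : ℝ} (hirr : Irrational ρ)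
    (hrot : HasRotationNumber f.F ρ) {q : ℕ} (hq : 0 < q) {p : ℤ} {x : ℕ → ℝ}
    (hx : ∀ j, x (j + 1) = f.F^[q] (x j) - p) : StrictMono x ∨ StrictAnti x := by
  rw [← f.translationNumber_toCircleDeg1Lift hrot] at hirr
  refine (forall_lt_iterate_sub_or_forall_iterate_sub_lt hirr hq p).imp
    (fun h => strictMono_nat_of_lt_succ fun j => ?_)
    fun h => strictAnti_nat_of_succ_lt fun j => ?_
  · exact (hx j).symm ▸ h (x j)
  · exact (hx j).symm ▸ h (x j)

lemma exists_crossRatio_orbit_le {ρ : ℝ} (hirr : Irrational ρ) (hrot : HasRotationNumber f.F ρ) :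
    ∃ B ≥ 1, ∀ (q : ℕ) (p : ℤ), IsBestApprox ρ q p → ∀ x : ℕ → ℝ, StrictMono x ∨ StrictAnti x →
      (∀ j, x (j + 1) = f.F^[q] (x j) - p) → ∀ j,
      crossRatio (x (j + 1)) (x (j + 2)) (x (j + 3)) (x (j + 4)) ≤
        B * crossRatio (x j) (x (j + 1)) (x (j + 2)) (x (j + 3)) := by
  obtain ⟨B, hB, hle⟩ := f.exists_crossRatio_iterate_le
  refine ⟨B, hB, fun q p hbest x hmono hx j => ?_⟩
  rw [← f.translationNumber_toCircleDeg1Lift hrot] at hirr hbest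
  have harc : ∀ i, NonoverlappingModOne (Finset.range q) (f.F^[·] (x i)) (f.F^[·] (x (i + 1))) :=
    fun i => (hx i).symm ▸ nonoverlappingModOne_iterate hirr hbest (x i)
  have himage : crossRatio (x (j + 1)) (x (j + 2)) (x (j + 3)) (x (j + 4)) = crossRatio
      (f.F^[q] (x j)) (f.F^[q] (x (j + 1))) (f.F^[q] (x (j + 2))) (f.F^[q] (x (j + 3))) := by
    rw [← crossRatio_add_const (f.F^[q] (x j)) _ _ _ (-p)]
    simp only [← sub_eq_add_neg, ← hx]
  rw [himage]
  rcases hmono with hmono | hanti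
  · exact hle q _ _ _ _ (hmono (by omega)) (hmono (by omega)) (hmono (by omega)) (harc j)
      (harc (j + 1)) (harc (j + 2))
  · rw [← crossRatio_rev, ← crossRatio_rev (x j)]
    exact hle q _ _ _ _ (hanti (by omega)) (hanti (by omega)) (hanti (by omega))
      (harc (j + 2)).symm (harc (j + 1)).symm (harc j).symm

lemma exists_orbit_min_gap (q : ℕ) (p : ℤ) (N : ℕ) :
    ∃ x : ℕ → ℝ, (∀ j, x (j + 1) = f.F^[q] (x j) - p) ∧
      ∀ j, |x (N + 1) - x N| ≤ |x (j + 1) - x j| := by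
  refine exists_orbit_displacement_min (G := fun x => f.F^[q] x - p)
    ((f.differentiable.continuous.iterate q).sub continuous_const) (fun x => ?_) N
  have hdeg : f.F^[q] (x + 1) = f.F^[q] x + 1 := by
    have hdeg := (f.toCircleDeg1Lift ^ q).map_add_one x
    rwa [CircleDeg1Lift.coe_pow] at hdeg
  simp only [hdeg]
  ring

end MCM

/-- **seven-point lemma.** There is `C₁ > 1` depending only on `f` such that
for each `n` there are points `z₁, …, z₅` with `z_{j+1} = f^{q_n}(z_j)` (written on lifts:
`z (j+1) = F^[q_n] (z j) - p_n`) whose three middle consecutive gaps are pairwise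
comparable. -/
theorem seven_point_lemma
    (f : MCM) (ρ : ℝ) (hirr : Irrational ρ) (hmem : ρ ∈ Set.Ioo (0 : ℝ) 1)
    (hrot : HasRotationNumber f.F ρ) :
    ∃ C₁ : ℝ, 1 < C₁ ∧ ∀ n : ℕ, ∃ z : ℕ → ℝ,
      (∀ j : ℕ, 1 ≤ j → j ≤ 4 → z (j + 1) = f.F^[qDen ρ n] (z j) - (pNum ρ n : ℝ)) ∧
      ∀ i : ℕ, 2 ≤ i → i ≤ 4 →
        C₁⁻¹ ≤ |z (i - 1) - z i| / |z (i + 1) - z i| ∧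
          |z (i - 1) - z i| / |z (i + 1) - z i| ≤ C₁ := by
  obtain ⟨B, hB, hcross⟩ := f.exists_crossRatio_orbit_le hirr hrot
  obtain ⟨C, hC, hgap⟩ := exists_forall_le_mul_of_mul_le hB 4
  refine ⟨C, hC, fun n => ?_⟩
  obtain ⟨z, hz, hmin⟩ := f.exists_orbit_min_gap (qDen ρ n) (pNum ρ n) 4
  have hmono := f.strictMono_or_strictAnti_orbit hirr hrot (qDen_pos hirr hmem n) hz
  have hpos : ∀ j, 0 < |z (j + 1) - z j| := fun j =>
    abs_pos.2 (sub_ne_zero.2 ((hmono.elim (·.injective) (·.injective)).ne j.succ_ne_self))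
  have hle := hgap (fun j => |z (j + 1) - z j|) hpos hmin fun j =>
    abs_sub_mul_abs_sub_le_of_crossRatio_le hmono (by linarith) j
      (hcross _ _ (isBestApprox_convergent hirr hmem n) z hmono hz j)
  refine ⟨z, fun j _ _ => hz j, fun i h₂ h₄ => ?_⟩
  obtain ⟨j, rfl⟩ := Nat.exists_eq_add_of_le' (show 1 ≤ i by omega)
  rw [Nat.add_sub_cancel, abs_sub_comm (z j)]
  exact inv_le_div_and_div_le (hpos 4) (hmin j) (hle j (by omega) (by omega)) (hmin (j + 1))
    (hle (j + 1) (by omega) h₄)
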